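/- For every integer N ≥ 2 and every real q with 0 < q < 1: (∑ over n ∈ (ℤ + 1/2)^N, i.e. vectors with all components in ℤ + 1/2, of q^((1/2)·∑_{j=1}^N (n_j + (N−j+1)/(2N))²)) · ∏_{k=1}^∞ (1 + q^(k−1)) / ∏_{k=1}^∞ (1−q^k)^N equals q^((N−1)(2N−1)/(48N)) · 2 · ∏_{k=1}^∞ (1 + q^(k−1/2)) / ∏_{k=1}^∞ (1 − q^((2k−1)/(2N))). -/

import Mathlib

open scoped BigOperators
open Filter Topology

namespace SpinorChar

/-- finite `q`-Pochhammer `(q;q)_n` -/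
noncomputable def P (q : ℝ) (n : ℕ) : ℝ := ∏ k ∈ Finset.range n, (1 - q ^ (k + 1))

/-- reciprocal of `(q;q)_i`, extended by zero to negative integers -/
noncomputable def r (q : ℝ) (i : ℤ) : ℝ := if i < 0 then 0 else (P q i.toNat)⁻¹

/-- gaussian weight -/
noncomputable def w (q s : ℝ) (j : ℤ) : ℝ := q ^ ((1 / 2 : ℝ) * ((j : ℝ) + s) ^ 2)

section
variable {q : ℝ} (hq0 : 0 < q) (hq1 : q < 1)

lemma fac_pos (hq0 : 0 < q) (hq1 : q < 1) (k : ℕ) : 0 < 1 - q ^ (k + 1) := by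
  have := pow_lt_one₀ hq0.le hq1 (Nat.succ_ne_zero k)
  simpa using this

lemma P_pos (hq0 : 0 < q) (hq1 : q < 1) (n : ℕ) : 0 < P q n :=
  Finset.prod_pos fun k _ => fac_pos hq0 hq1 k

lemma r_rec (hq0 : 0 < q) (hq1 : q < 1) (i : ℤ) : r q (i - 1) = (1 - q ^ i) * r q i := by
  rcases lt_trichotomy i 0 with h | h | h
  · simp [r, h, show i - 1 < 0 by omega]
  · subst h; simp [r]
  · obtain ⟨n, rfl⟩ : ∃ n : ℕ, i = n + 1 := ⟨(i - 1).toNat, by omega⟩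
    have h1 := (P_pos hq0 hq1 n).ne'
    have h2 := (fac_pos hq0 hq1 n).ne'
    have h3 : ((n : ℤ) + 1).toNat = n + 1 := by omega
    have h4 : q ^ ((n : ℤ) + 1) = q ^ (n + 1) := by exact_mod_cast zpow_natCast q (n + 1)
    have h5 : ¬ ((n : ℤ) + 1 < 0) := by omega
    have h6 : ¬ ((n : ℤ) < 0) := by omega
    simp only [r, add_sub_cancel_right, h3, h4, h5, h6, if_false]
    simp only [P, Finset.prod_range_succ] at h1 ⊢
    simp
    field_simp

lemma w_pos (hq0 : 0 < q) (s : ℝ) (j : ℤ) : 0 < w q s j := Real.rpow_pos_of_pos hq0 _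

lemma w_le (hq0 : 0 < q) (hq1 : q < 1) (s : ℝ) (j : ℤ) :
    w q s j ≤ q ^ (-|s| - 1 / 2) * q ^ (|(j : ℝ)|) := by
  rw [← Real.rpow_add hq0]
  apply Real.rpow_le_rpow_of_exponent_ge hq0 hq1.le
  have h1 := neg_abs_le s
  have h2 := le_abs_self s
  rcases abs_cases (j : ℝ) with ⟨h, _⟩ | ⟨h, _⟩ <;> rw [h]
  · nlinarith [sq_nonneg ((j : ℝ) + s - 1)]
  · nlinarith [sq_nonneg ((j : ℝ) + s + 1)]

lemma w_summable (hq0 : 0 < q) (hq1 : q < 1) (s : ℝ) : Summable (w q s) := by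
  refine Summable.of_nonneg_of_le (fun j => (w_pos hq0 s j).le) (w_le hq0 hq1 s) ?_
  apply Summable.mul_left
  have hg := summable_geometric_of_lt_one hq0.le hq1
  apply Summable.of_nat_of_neg <;> simpa using hg

lemma r_zero_of_neg {i : ℤ} (h : i < 0) : r q i = 0 := by simp [r, h]

lemma F_summable (n : ℤ) (s : ℝ) :
    Summable (fun j : ℤ => r q (n - j) * r q (n + j) * w q s j) := by
  apply summable_of_ne_finset_zero (s := Finset.Icc (-n) n)
  intro j hj
  rw [Finset.mem_Icc, not_and_or] at hj
  rcases hj with hj | hj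
  · rw [r_zero_of_neg (i := n + j) (by omega)]; simp
  · rw [r_zero_of_neg (i := n - j) (by omega)]; simp

/-- finite Jacobi triple product -/
lemma finite_jtp (hq0 : 0 < q) (hq1 : q < 1) (s : ℝ) (n : ℕ) :
    P q (2 * n) * ∑' j : ℤ, r q (n - j) * r q (n + j) * w q s j =
      q ^ ((1 / 2 : ℝ) * s ^ 2) * ∏ k ∈ Finset.range n,
        ((1 + q ^ ((k : ℝ) + 1 / 2 + s)) * (1 + q ^ ((k : ℝ) + 1 / 2 - s))) := by
  induction n with
  | zero =>
    rw [tsum_eq_single 0]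
    · simp [r, P, w]
    · intro j hj
      rcases lt_or_gt_of_ne hj with h | h
      · rw [r_zero_of_neg (i := ((0 : ℕ) : ℤ) + j) (by simpa using h)]; simp
      · rw [r_zero_of_neg (i := ((0 : ℕ) : ℤ) - j) (by simpa using h)]; simp
  | succ n ih =>
    rw [Finset.prod_range_succ, ← mul_assoc, ← ih]
    set A := q ^ ((n : ℝ) + 1 / 2 + s)
    set B := q ^ ((n : ℝ) + 1 / 2 - s)
    set f : ℤ → ℝ := fun j => r q (n - j) * r q (n + j) * w q s j with hf
    have hfs : Summable f := F_summable n s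
    have s1 : Summable (fun j => f (j - 1)) :=
      hfs.comp_injective (i := fun j : ℤ => j - 1) (fun a b h => by simpa using h)
    have s2 : Summable (fun j => f (j + 1)) :=
      hfs.comp_injective (i := fun j : ℤ => j + 1) (fun a b h => by simpa using h)
    have e1 : ∑' j, f (j - 1) = ∑' j, f j := (Equiv.subRight (1 : ℤ)).tsum_eq f
    have e2 : ∑' j, f (j + 1) = ∑' j, f j := (Equiv.addRight (1 : ℤ)).tsum_eq f
    have hAB : A * B = q ^ (2 * n + 1) := by
      rw [← Real.rpow_natCast, ← Real.rpow_add hq0]; congr 1; push_cast; ring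
    have key : ∀ j : ℤ, (1 - q ^ (2 * n + 1)) * (1 - q ^ (2 * n + 2)) *
        (r q ((n + 1 : ℕ) - j) * r q ((n + 1 : ℕ) + j) * w q s j) =
        (1 + A * B) * f j + A * f (j - 1) + B * f (j + 1) := by
      intro j
      have ea : ((n + 1 : ℕ) : ℤ) - j = n + 1 - j := by push_cast; ring
      have eb : ((n + 1 : ℕ) : ℤ) + j = n + 1 + j := by push_cast; ring
      have r1 : r q (n - j) = (1 - q ^ ((n : ℤ) + 1 - j)) * r q (n + 1 - j) := by
        rw [← r_rec hq0 hq1]; congr 1; ring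
      have r2 : r q (n + j) = (1 - q ^ ((n : ℤ) + 1 + j)) * r q (n + 1 + j) := by
        rw [← r_rec hq0 hq1]; congr 1; ring
      have r3 : r q (n - (j + 1)) = (1 - q ^ ((n : ℤ) - j)) * r q (n - j) := by
        rw [← r_rec hq0 hq1]; congr 1; ring
      have r4 : r q (n + (j - 1)) = (1 - q ^ ((n : ℤ) + j)) * r q (n + j) := by
        rw [← r_rec hq0 hq1]; congr 1; ring
      have r5 : r q (n - (j - 1)) = r q (n + 1 - j) := by congr 1; ring
      have r6 : r q (n + (j + 1)) = r q (n + 1 + j) := by congr 1; ring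
      have w1 : A * w q s (j - 1) = q ^ ((n : ℤ) + 1 - j) * w q s j := by
        rw [← Real.rpow_intCast, w, w, ← Real.rpow_add hq0, ← Real.rpow_add hq0]
        congr 1; push_cast; ring
      have w2 : B * w q s (j + 1) = q ^ ((n : ℤ) + 1 + j) * w q s j := by
        rw [← Real.rpow_intCast, w, w, ← Real.rpow_add hq0, ← Real.rpow_add hq0]
        congr 1; push_cast; ring
      have u1 : q ^ ((n : ℤ) - j) * q = q ^ ((n : ℤ) + 1 - j) := by
        rw [← zpow_add_one₀ hq0.ne']; congr 1; ring
      have v1 : q ^ ((n : ℤ) + j) * q = q ^ ((n : ℤ) + 1 + j) := by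
        rw [← zpow_add_one₀ hq0.ne']; congr 1; ring
      have uv : q ^ (2 * n + 1) = q ^ ((n : ℤ) - j) * q ^ ((n : ℤ) + j) * q := by
        rw [← zpow_add₀ hq0.ne', ← zpow_add_one₀ hq0.ne', ← zpow_natCast]; congr 1; push_cast; ring
      have t1 : A * f (j - 1) = r q (n - (j - 1)) * r q (n + (j - 1)) * (A * w q s (j - 1)) := by
        simp only [hf]; ring
      have t2 : B * f (j + 1) = r q (n - (j + 1)) * r q (n + (j + 1)) * (B * w q s (j + 1)) := by
        simp only [hf]; ring
      rw [t1, t2, w1, w2, hAB, r3, r4, r5, r6, ea, eb]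
      simp only [hf]
      rw [r1, r2, show q ^ (2 * n + 2) = q ^ (2 * n + 1) * q by ring, uv, ← u1, ← v1]
      ring
    have hsum : (1 - q ^ (2 * n + 1)) * (1 - q ^ (2 * n + 2)) *
        ∑' j : ℤ, r q ((n + 1 : ℕ) - j) * r q ((n + 1 : ℕ) + j) * w q s j =
        (1 + A) * (1 + B) * ∑' j, f j := by
      rw [← tsum_mul_left, tsum_congr key, Summable.tsum_add, Summable.tsum_add, tsum_mul_left,
        tsum_mul_left, tsum_mul_left, e1, e2]
      · ring
      · exact hfs.mul_left _
      · exact s1.mul_left _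
      · exact (hfs.mul_left _).add (s1.mul_left _)
      · exact s2.mul_left _
    have hP : P q (2 * (n + 1)) = P q (2 * n) * ((1 - q ^ (2 * n + 1)) * (1 - q ^ (2 * n + 2))) := by
      rw [show 2 * (n + 1) = 2 * n + 1 + 1 by ring, P, Finset.prod_range_succ,
        Finset.prod_range_succ, P, mul_assoc]
    rw [hP, mul_assoc, hsum]; ring

lemma geo_mult (hq0 : 0 < q) (hq1 : q < 1) (c : ℝ) :
    Multipliable (fun k : ℕ => 1 + q ^ ((k : ℝ) + c)) := by
  apply Real.multipliable_one_add_of_summable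
  simp_rw [Real.rpow_add hq0, Real.rpow_natCast]
  exact (summable_geometric_of_lt_one hq0.le hq1).mul_right _

lemma P_summ (hq0 : 0 < q) (hq1 : q < 1) : Summable (fun k : ℕ => -q ^ (k + 1)) := by
  simp_rw [pow_succ]
  exact ((summable_geometric_of_lt_one hq0.le hq1).mul_right _).neg

lemma P_mult (hq0 : 0 < q) (hq1 : q < 1) : Multipliable (fun k : ℕ => 1 - q ^ (k + 1)) := by
  simpa [sub_eq_add_neg] using Real.multipliable_one_add_of_summable (P_summ hq0 hq1)

lemma Pinf_ne (hq0 : 0 < q) (hq1 : q < 1) : ∏' k : ℕ, (1 - q ^ (k + 1)) ≠ 0 := by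
  have := tprod_one_add_ne_zero_of_summable (R := ℝ) (f := fun k : ℕ => -q ^ (k + 1))
    (fun k => by simpa [sub_eq_add_neg] using (fac_pos hq0 hq1 k).ne')
    (by simpa using (P_summ hq0 hq1).norm)
  simpa [sub_eq_add_neg] using this

lemma P_anti (hq0 : 0 < q) (hq1 : q < 1) : Antitone (P q) := by
  apply antitone_nat_of_succ_le
  intro n
  rw [P, Finset.prod_range_succ]
  have h1 := P_pos hq0 hq1 n
  have : (1 - q ^ (n + 1)) ≤ 1 := by have := pow_pos hq0 (n + 1); linarith
  exact mul_le_of_le_one_right h1.le this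

lemma P_tendsto (hq0 : 0 < q) (hq1 : q < 1) :
    Tendsto (P q) atTop (𝓝 (∏' k : ℕ, (1 - q ^ (k + 1)))) :=
  (P_mult hq0 hq1).tendsto_prod_tprod_nat

lemma Pinf_le (hq0 : 0 < q) (hq1 : q < 1) (n : ℕ) : ∏' k : ℕ, (1 - q ^ (k + 1)) ≤ P q n :=
  (P_anti hq0 hq1).le_of_tendsto (P_tendsto hq0 hq1) n

lemma Pinf_pos (hq0 : 0 < q) (hq1 : q < 1) : 0 < ∏' k : ℕ, (1 - q ^ (k + 1)) :=
  lt_of_le_of_ne (ge_of_tendsto' (P_tendsto hq0 hq1) fun n => (P_pos hq0 hq1 n).le)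
    (Pinf_ne hq0 hq1).symm

lemma r_nonneg (hq0 : 0 < q) (hq1 : q < 1) (i : ℤ) : 0 ≤ r q i := by
  unfold r; split_ifs
  · exact le_rfl
  · exact (inv_pos.mpr (P_pos hq0 hq1 _)).le

lemma r_le (hq0 : 0 < q) (hq1 : q < 1) (i : ℤ) : r q i ≤ (∏' k : ℕ, (1 - q ^ (k + 1)))⁻¹ := by
  unfold r; split_ifs
  · exact (inv_pos.mpr (Pinf_pos hq0 hq1)).le
  · exact inv_anti₀ (Pinf_pos hq0 hq1) (Pinf_le hq0 hq1 _)

lemma r_tendsto (hq0 : 0 < q) (hq1 : q < 1) :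
    Tendsto (r q) atTop (𝓝 (∏' k : ℕ, (1 - q ^ (k + 1)))⁻¹) := by
  have ht : Tendsto Int.toNat atTop atTop := by
    apply tendsto_atTop.mpr
    intro b
    filter_upwards [eventually_ge_atTop (b : ℤ)] with a ha
    omega
  have := ((P_tendsto hq0 hq1).comp ht).inv₀ (Pinf_ne hq0 hq1)
  refine this.congr' ?_
  filter_upwards [eventually_ge_atTop (0 : ℤ)] with a ha
  simp [r, not_lt.mpr ha]

/-- Jacobi triple product -/
lemma jtp (hq0 : 0 < q) (hq1 : q < 1) (s : ℝ) :
    ∑' j : ℤ, w q s j = q ^ ((1 / 2 : ℝ) * s ^ 2) * (∏' k : ℕ, (1 - q ^ (k + 1))) *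
      ∏' k : ℕ, ((1 + q ^ ((k : ℝ) + (1 / 2 + s))) * (1 + q ^ ((k : ℝ) + (1 / 2 - s)))) := by
  set R := ∏' k : ℕ, (1 - q ^ (k + 1)) with hR
  have hRp : 0 < R := Pinf_pos hq0 hq1
  have hL : Tendsto (fun n : ℕ => P q (2 * n) * ∑' j : ℤ, r q (n - j) * r q (n + j) * w q s j)
      atTop (𝓝 (R * ∑' j : ℤ, R⁻¹ * R⁻¹ * w q s j)) := by
    apply Tendsto.mul
    · exact (P_tendsto hq0 hq1).comp (tendsto_id.const_mul_atTop' (by norm_num))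
    · refine tendsto_tsum_of_dominated_convergence (bound := fun j => R⁻¹ * R⁻¹ * w q s j)
        ((w_summable hq0 hq1 s).mul_left _) ?_ ?_
      · intro j
        refine Tendsto.mul_const _ (Tendsto.mul ?_ ?_)
        · exact (r_tendsto hq0 hq1).comp
            (tendsto_atTop_add_const_right _ (-j) tendsto_natCast_atTop_atTop)
        · exact (r_tendsto hq0 hq1).comp
            (tendsto_atTop_add_const_right _ j tendsto_natCast_atTop_atTop)
      · refine Eventually.of_forall fun n j => ?_
        have a1 := r_nonneg hq0 hq1 (n - j)
        have a2 := r_nonneg hq0 hq1 (n + j)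
        have a3 := (w_pos hq0 s j).le
        rw [Real.norm_of_nonneg (by positivity)]
        exact mul_le_mul_of_nonneg_right (mul_le_mul (r_le hq0 hq1 _) (r_le hq0 hq1 _) a2
          (inv_pos.mpr hRp).le) a3
  have hM := ((geo_mult hq0 hq1 (1 / 2 + s)).mul (geo_mult hq0 hq1 (1 / 2 - s)))
  have hRt := hM.tendsto_prod_tprod_nat.const_mul (q ^ ((1 / 2 : ℝ) * s ^ 2))
  have heq : (fun n : ℕ => P q (2 * n) * ∑' j : ℤ, r q (n - j) * r q (n + j) * w q s j) =
      fun n : ℕ => q ^ ((1 / 2 : ℝ) * s ^ 2) * ∏ k ∈ Finset.range n,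
        ((1 + q ^ ((k : ℝ) + (1 / 2 + s))) * (1 + q ^ ((k : ℝ) + (1 / 2 - s)))) := by
    funext n
    rw [finite_jtp hq0 hq1 s n]
    simp only [← add_assoc, ← add_sub_assoc]
  rw [heq] at hL
  have := tendsto_nhds_unique hL hRt
  rw [tsum_mul_left] at this
  rw [mul_right_comm, ← this]
  field_simp

end

/-- product of sums over a finite family -/
lemma tsum_pi_prod (N : ℕ) (f : Fin N → ℤ → ℝ) (h0 : ∀ i j, 0 ≤ f i j)
    (hs : ∀ i, Summable (f i)) :
    Summable (fun n : Fin N → ℤ => ∏ i, f i (n i)) ∧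
    ∑' n : Fin N → ℤ, ∏ i, f i (n i) = ∏ i, ∑' j, f i j := by
  induction N with
  | zero => exact ⟨(hasSum_fintype _).summable, by simp⟩
  | succ N ih =>
    obtain ⟨i1, i2⟩ := ih (fun i => f i.succ) (fun i => h0 _) (fun i => hs _)
    let e := Fin.consEquiv (fun _ : Fin (N + 1) => ℤ)
    have hcomp : (fun n : Fin (N + 1) → ℤ => ∏ i, f i (n i)) ∘ e =
        fun x : ℤ × (Fin N → ℤ) => f 0 x.1 * ∏ i, f (Fin.succ i) (x.2 i) := by
      funext x
      simp [e, Fin.prod_univ_succ, Fin.consEquiv]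
    have hsm : Summable (fun x : ℤ × (Fin N → ℤ) => f 0 x.1 * ∏ i, f (Fin.succ i) (x.2 i)) :=
      Summable.mul_of_nonneg (f := f 0) (g := fun n : Fin N → ℤ => ∏ i, f (Fin.succ i) (n i))
        (hs 0) i1 (fun j => h0 0 j) (fun n => Finset.prod_nonneg fun i _ => h0 _ _)
    constructor
    · rw [← e.summable_iff, hcomp]; exact hsm
    · rw [← e.tsum_eq, Fin.prod_univ_succ, ← i2, (hs 0).tsum_mul_tsum i1 hsm]
      exact tsum_congr fun x => congrFun hcomp x

lemma euler {p : ℝ} (hp0 : 0 < p) (hp1 : p < 1) :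
    (∏' j : ℕ, (1 + p ^ (j + 1))) * ∏' k : ℕ, (1 - p ^ (2 * k + 1)) = 1 := by
  have hm1 : Multipliable (fun k : ℕ => 1 + p ^ (k + 1)) := by
    apply Real.multipliable_one_add_of_summable
    simpa using (P_summ hp0 hp1).neg
  have hm2 := P_mult hp0 hp1
  have hp2 : p ^ 2 < 1 := pow_lt_one₀ hp0.le hp1 (by norm_num)
  have hm3 := P_mult (pow_pos hp0 2) hp2
  have hne := Pinf_ne (pow_pos hp0 2) hp2
  have e1 : (∏' j : ℕ, (1 + p ^ (j + 1))) * ∏' k : ℕ, (1 - p ^ (k + 1)) =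
      ∏' k : ℕ, (1 - (p ^ 2) ^ (k + 1)) := by
    rw [← hm1.tprod_mul hm2]
    exact tprod_congr fun k => by ring
  have ho : Multipliable (fun k : ℕ => 1 - p ^ (2 * k + 1)) := by
    have : Summable (fun k : ℕ => -p ^ (2 * k + 1)) := by
      simp_rw [pow_succ, pow_mul]
      exact ((summable_geometric_of_lt_one (pow_pos hp0 2).le hp2).mul_right _).neg
    simpa [sub_eq_add_neg] using Real.multipliable_one_add_of_summable this
  have e2 := tprod_even_mul_odd (f := fun k : ℕ => 1 - p ^ (k + 1)) ho
    (hm3.congr fun k => by rw [← pow_mul]; ring_nf)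
  have e3 : ∏' k : ℕ, (1 - p ^ (2 * k + 1 + 1)) = ∏' k : ℕ, (1 - (p ^ 2) ^ (k + 1)) :=
    tprod_congr fun k => by rw [← pow_mul]; ring_nf
  rw [← e2, e3, ← mul_assoc] at e1
  exact mul_right_cancel₀ hne (by rw [e1, one_mul])

lemma residue {p : ℝ} (hp0 : 0 < p) (hp1 : p < 1) (M : ℕ) [NeZero M] :
    Multipliable (fun k : ℕ => ∏ i ∈ Finset.range M, (1 + p ^ (M * k + (i + 1)))) ∧
    ∏' k : ℕ, ∏ i ∈ Finset.range M, (1 + p ^ (M * k + (i + 1))) = ∏' j : ℕ, (1 + p ^ (j + 1)) := by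
  have hm1 : Multipliable (fun k : ℕ => 1 + p ^ (k + 1)) := by
    apply Real.multipliable_one_add_of_summable
    simpa using (P_summ hp0 hp1).neg
  let e := (Nat.divModEquiv M).symm
  have h2 : HasProd ((fun k : ℕ => 1 + p ^ (k + 1)) ∘ e) (∏' j : ℕ, (1 + p ^ (j + 1))) :=
    e.hasProd_iff.mpr hm1.hasProd
  have h3 := h2.prod_fiberwise (g := fun k => ∏ i ∈ Finset.range M, (1 + p ^ (M * k + (i + 1))))
    (fun k => by
      rw [Finset.prod_range]
      convert hasProd_fintype _ using 1
      refine Finset.prod_congr rfl fun i _ => ?_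
      simp [e, Nat.divModEquiv]
      ring)
  exact ⟨h3.multipliable, h3.tprod_eq⟩

lemma finite_id (N : ℕ) (g : ℕ → ℝ) :
    (∏ j ∈ Finset.range N, (g (N + j) * g (N - j))) * g (2 * N) =
      (∏ i ∈ Finset.range (2 * N), g (i + 1)) * g N := by
  rw [Finset.prod_mul_distrib, two_mul, Finset.prod_range_add]
  have h1 : ∏ j ∈ Finset.range N, g (N - j) = ∏ j ∈ Finset.range N, g (j + 1) := by
    rw [← Finset.prod_range_reflect]
    refine Finset.prod_congr rfl fun i hi => ?_
    rw [Finset.mem_range] at hi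
    congr 1; omega
  have h2 : (∏ j ∈ Finset.range N, g (N + j)) * g (N + N) =
      (∏ j ∈ Finset.range N, g (N + j + 1)) * g N := by
    rw [← Finset.prod_range_succ (fun j => g (N + j)), Finset.prod_range_succ']
    rfl
  rw [h1, mul_right_comm, h2]; ring

lemma sq_sum (N : ℕ) : ∑ j ∈ Finset.range N, (j : ℝ) ^ 2 = N * (N - 1) * (2 * N - 1) / 6 := by
  induction N with
  | zero => simp
  | succ n ih => rw [Finset.sum_range_succ, ih]; push_cast; ring

end SpinorChar

open SpinorChar in
/-- Principal specialization character identity for the spinor module `L_{Λ_N}`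
    of affine `so(2N+1)`: the sum over the shifted lattice `(ℤ+1/2)^N`
    (parametrized by `n + 1/2`, `n ∈ ℤ^N`, further shifted by `ρ̄/(2N)`,
    `ρ̄ = (N,…,1)`) with one Ramond fermion equals
    `q^((N−1)(2N−1)/(48N)) · 2 · ∏(1+q^(k−1/2))/∏(1−q^((2k−1)/(2N)))`. -/
theorem stmt11 (N : ℕ) (hN : 2 ≤ N) (q : ℝ) (hq0 : 0 < q) (hq1 : q < 1) :
    (∑' n : Fin N → ℤ,
        q ^ ((1 / 2 : ℝ) * ∑ j : Fin N,
          (((n j : ℝ) + 1 / 2) + ((N : ℝ) - (j.val : ℝ)) / (2 * N)) ^ 2)) *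
      (∏' k : ℕ, (1 + q ^ (k : ℕ))) / ∏' k : ℕ, (1 - q ^ (k + 1)) ^ N =
      q ^ (((N : ℝ) - 1) * (2 * (N : ℝ) - 1) / (48 * N)) * 2 *
        (∏' k : ℕ, (1 + q ^ ((k : ℝ) + 1 / 2))) /
        ∏' k : ℕ, (1 - q ^ ((2 * (k : ℝ) + 1) / (2 * N))) := by
  have hNR : (N : ℝ) ≠ 0 := by positivity
  have : NeZero (2 * N) := ⟨by omega⟩
  set R := ∏' k : ℕ, (1 - q ^ (k + 1)) with hR
  have hRp : 0 < R := Pinf_pos hq0 hq1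
  obtain ⟨p, hp0, hp1, hpq⟩ : ∃ p : ℝ, 0 < p ∧ p < 1 ∧ ∀ m : ℕ, p ^ m = q ^ ((m : ℝ) / (2 * N)) := by
    refine ⟨q ^ (1 / (2 * (N : ℝ))), Real.rpow_pos_of_pos hq0 _,
      Real.rpow_lt_one hq0.le hq1 (by positivity), fun m => ?_⟩
    rw [← Real.rpow_natCast, ← Real.rpow_mul hq0.le]; congr 1; field_simp
  -- shift parameter
  let s : ℕ → ℝ := fun j => (j : ℝ) / (2 * N)
  have hsum : (∑' n : Fin N → ℤ, q ^ ((1 / 2 : ℝ) * ∑ j : Fin N,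
          (((n j : ℝ) + 1 / 2) + ((N : ℝ) - (j.val : ℝ)) / (2 * N)) ^ 2)) =
      ∏ j ∈ Finset.range N, ∑' i : ℤ, w q (s j) i := by
    rw [Finset.prod_range]
    have h1 : ∀ j : Fin N, ∑' i : ℤ, w q (s j) i =
        ∑' i : ℤ, w q (1 / 2 + ((N : ℝ) - (j.val : ℝ)) / (2 * N)) i := by
      intro j
      rw [← (Equiv.subLeft (-1 : ℤ)).tsum_eq]
      refine tsum_congr fun i => ?_
      simp only [w, s, Equiv.subLeft_apply]
      congr 1; push_cast; field_simp; ring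
    simp_rw [h1]
    rw [← (tsum_pi_prod N (fun j : Fin N => w q (1 / 2 + ((N : ℝ) - (j.val : ℝ)) / (2 * N))) (fun i j => (w_pos hq0 _ j).le) (fun i => w_summable hq0 hq1 _)).2]
    refine tsum_congr fun n => ?_
    simp only [w]
    rw [← Real.rpow_sum_of_pos hq0, Finset.mul_sum]
    congr 1
    refine Finset.sum_congr rfl fun j _ => ?_
    ring
  have hR' : ∏' k : ℕ, (1 - q ^ (k + 1)) ^ N = R ^ N := (P_mult hq0 hq1).tprod_pow N
  have hexp : ∏ j ∈ Finset.range N, q ^ ((1 / 2 : ℝ) * s j ^ 2) =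
      q ^ (((N : ℝ) - 1) * (2 * (N : ℝ) - 1) / (48 * N)) := by
    rw [← Real.rpow_sum_of_pos hq0, ← Finset.mul_sum]
    simp only [s, div_pow]
    rw [← Finset.sum_div, sq_sum]
    congr 1; field_simp; ring
  have hram : ∏' k : ℕ, (1 + q ^ (k : ℕ)) = 2 * ∏' k : ℕ, (1 + q ^ (k + 1)) := by
    have hm : Multipliable (fun k : ℕ => 1 + q ^ (k + 1)) := by
      apply Real.multipliable_one_add_of_summable
      simpa using (P_summ hq0 hq1).neg
    rw [tprod_eq_zero_mul' (f := fun k : ℕ => 1 + q ^ k) hm]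
    norm_num
  have hm0 : Multipliable (fun k : ℕ => 1 + q ^ (k + 1)) := by
    apply Real.multipliable_one_add_of_summable
    simpa using (P_summ hq0 hq1).neg
  have hmj : ∀ j ∈ Finset.range N, Multipliable (fun k : ℕ =>
      ((1 + q ^ ((k : ℝ) + (1 / 2 + s j))) * (1 + q ^ ((k : ℝ) + (1 / 2 - s j))))) :=
    fun j _ => (geo_mult hq0 hq1 _).mul (geo_mult hq0 hq1 _)
  obtain ⟨hmr, hres⟩ := residue hp0 hp1 (2 * N)
  have hmain : (∏ j ∈ Finset.range N, ∏' k : ℕ,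
      ((1 + q ^ ((k : ℝ) + (1 / 2 + s j))) * (1 + q ^ ((k : ℝ) + (1 / 2 - s j))))) *
      (∏' k : ℕ, (1 + q ^ (k + 1))) =
      (∏' j : ℕ, (1 + p ^ (j + 1))) * ∏' k : ℕ, (1 + q ^ ((k : ℝ) + 1 / 2)) := by
    rw [← Multipliable.tprod_finsetProd hmj, ← Multipliable.tprod_mul (multipliable_prod hmj) hm0,
      ← hres, ← hmr.tprod_mul (geo_mult hq0 hq1 _)]
    refine tprod_congr fun k => ?_
    have := finite_id N (fun t => 1 + p ^ (2 * N * k + t))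
    convert this using 2
    · refine Finset.prod_congr rfl fun j hj => ?_
      have hj' := (Finset.mem_range.mp hj).le
      rw [hpq, hpq]
      congr 3
      · simp only [s]; push_cast; field_simp
      · simp only [s]; push_cast [Nat.cast_sub hj']; field_simp
    · rw [hpq, ← Real.rpow_natCast]; congr 2; push_cast; field_simp
    · rw [hpq]; congr 2; push_cast; field_simp
  have hodd : ∏' k : ℕ, (1 - q ^ ((2 * (k : ℝ) + 1) / (2 * N))) = ∏' k : ℕ, (1 - p ^ (2 * k + 1)) :=
    tprod_congr fun k => by rw [hpq]; push_cast; rfl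
  have heul := euler hp0 hp1
  have hodd0 : ∏' k : ℕ, (1 - p ^ (2 * k + 1)) ≠ 0 := right_ne_zero_of_mul_eq_one heul
  rw [hsum, hR', hram, hodd]
  simp_rw [jtp hq0 hq1]
  rw [Finset.prod_mul_distrib, Finset.prod_mul_distrib, hexp, Finset.prod_const,
    Finset.card_range, ← hR]
  rw [div_eq_div_iff (pow_pos hRp N).ne' hodd0]
  set Q := q ^ (((N : ℝ) - 1) * (2 * (N : ℝ) - 1) / (48 * N))
  set O := ∏' k : ℕ, (1 - p ^ (2 * k + 1))
  set G := ∏' k : ℕ, (1 + q ^ ((k : ℝ) + 1 / 2))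
  linear_combination (2 * Q * R ^ N * O) * hmain + (2 * Q * R ^ N * G) * heul
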